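/- Fix a positive integer m and s = (α,β) ∈ ℚ², and define the completed Appell–Lerch sum Â^s_m(τ,z) := A^s_m(τ,z) + ∑_{ℓ=0}^{2m−1} Θ^{s,*}_{m,ℓ}(τ)·θ_{m,ℓ}(τ,z). Then: (1) Â^{(α+λ,β+μ)}_m = e(−m(μα−λβ))·Â^{(α,β)}_m for all λ,μ ∈ ℤ; (2) Â^s_m(τ, z+λτ+μ) = e(−m(λ²τ+2λz))·Â^s_m(τ,z) for all λ,μ ∈ ℤ; (3) Â^s_m((aτ+b)/(cτ+d), z/(cτ+d)) = (cτ+d)·e(mcz²/(cτ+d))·Â^{sγ}_m(τ,z) for every γ = (a,b;c,d) ∈ SL(2,ℤ), where sγ := (αa+βc, αb+βd). -/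

import Mathlib

noncomputable section

open Complex Filter Topology MeasureTheory
open scoped Classical

/-- `ee x = e^{2πix}`. -/
def ee (x : ℂ) : ℂ := Complex.exp (2 * (Real.pi : ℂ) * Complex.I * x)

/-- The index-`m` elliptic transformation law on `ℍ × ℂ`. -/
def EllipticLaw (m : ℕ) (φ : ℂ → ℂ → ℂ) : Prop :=
  ∀ τ : ℂ, 0 < τ.im → ∀ z : ℂ, ∀ lam mu : ℤ,
    φ τ (z + (lam : ℂ) * τ + (mu : ℂ)) =
      ee (-(m : ℂ) * ((lam : ℂ) ^ 2 * τ + 2 * (lam : ℂ) * z)) * φ τ z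

/-- The weight-`k` index-`m` modular transformation law on `ℍ × ℂ`. -/
def ModularLaw (k : ℤ) (m : ℕ) (φ : ℂ → ℂ → ℂ) : Prop :=
  ∀ τ : ℂ, 0 < τ.im → ∀ z : ℂ, ∀ a b c d : ℤ, a * d - b * c = 1 →
    φ (((a : ℂ) * τ + (b : ℂ)) / ((c : ℂ) * τ + (d : ℂ))) (z / ((c : ℂ) * τ + (d : ℂ))) =
      ((c : ℂ) * τ + (d : ℂ)) ^ k *
        ee ((m : ℂ) * (c : ℂ) * z ^ 2 / ((c : ℂ) * τ + (d : ℂ))) * φ τ z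

/-- The theta function `θ_{m,ℓ}(τ,z) = ∑_{r ≡ ℓ (mod 2m)} q^{r²/4m} y^r`. -/
def jTheta (m : ℕ) (l : ℤ) (τ z : ℂ) : ℂ :=
  ∑' n : ℤ, ee (((l : ℂ) + 2 * (m : ℂ) * (n : ℂ)) ^ 2 / (4 * (m : ℂ)) * τ +
      ((l : ℂ) + 2 * (m : ℂ) * (n : ℂ)) * z)

/-- The point `z_s = ατ + β` for `s = (α,β) ∈ ℚ²`. -/
def zpt (s : ℚ × ℚ) (τ : ℂ) : ℂ := (s.1 : ℚ) * τ + (s.2 : ℚ)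

/-- The rational function `R_c`. -/
def Rc (c : ℝ) (y : ℂ) : ℂ :=
  if (⌈c⌉ : ℝ) = c then 1 / 2 * y ^ ⌈c⌉ * (y + 1) / (y - 1) else y ^ ⌈c⌉ / (y - 1)

/-- The index-`m` averaging operator `Av^{(m)}[F](τ,z) = ∑_{λ∈ℤ} q^{mλ²} y^{2mλ} F(q^λ y)`. -/
def Av (m : ℕ) (F : ℂ → ℂ) (τ z : ℂ) : ℂ :=
  ∑' lam : ℤ, ee ((m : ℂ) * (lam : ℂ) ^ 2 * τ + 2 * (m : ℂ) * (lam : ℂ) * z) *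
      F (ee ((lam : ℂ) * τ + z))

/-- The Appell–Lerch sum `A^s_m(τ,z) = e(-mα z_s)·Av^{(m)}[R_{-2mα}(y/y_s)]`. -/
def AppellA (m : ℕ) (s : ℚ × ℚ) (τ z : ℂ) : ℂ :=
  ee (-(m : ℂ) * (s.1 : ℚ) * zpt s τ) *
    Av m (fun w => Rc ((-(2 * (m : ℚ) * s.1) : ℚ) : ℝ) (w / ee (zpt s τ))) τ z

/-- The complementary error function. -/
def erfc (x : ℝ) : ℝ := 2 / Real.sqrt Real.pi * ∫ t in Set.Ioi x, Real.exp (-t ^ 2)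

/-- The element `λ = n + α + ℓ/2m` of `ℤ + α + ℓ/2m`. -/
def lamVal (m : ℕ) (s : ℚ × ℚ) (l : ℤ) (n : ℤ) : ℝ :=
  (n : ℝ) + (s.1 : ℝ) + (l : ℝ) / (2 * (m : ℝ))

/-- The Eichler integral `Θ^{s,*}_{m,ℓ}(τ)` of the weight-3/2 unary theta series. -/
def ThStar (m : ℕ) (s : ℚ × ℚ) (l : ℤ) (τ : ℂ) : ℂ :=
  ee ((m : ℂ) * (s.1 : ℚ) * (s.2 : ℚ)) / 2 *
    ∑' n : ℤ, (Real.sign (lamVal m s l n) : ℂ) *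
      ee (-(2 * (m : ℂ) * (s.2 : ℚ) * (lamVal m s l n : ℝ))) *
      (erfc (2 * |lamVal m s l n| * Real.sqrt (Real.pi * (m : ℝ) * τ.im)) : ℂ) *
      ee (-(m : ℂ) * (lamVal m s l n : ℝ) ^ 2 * τ)

/-- The completed Appell–Lerch sum `Â^s_m = A^s_m + ∑_{ℓ mod 2m} Θ^{s,*}_{m,ℓ}·θ_{m,ℓ}`. -/
def AhatA (m : ℕ) (s : ℚ × ℚ) (τ z : ℂ) : ℂ :=
  AppellA m s τ z + ∑ l ∈ Finset.range (2 * m), ThStar m s (l : ℤ) τ * jTheta m (l : ℤ) τ z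

lemma summable_gauss (A : ℝ) (hA : 0 < A) (B : ℝ) :
    Summable fun n : ℤ => Real.exp (-A * (n:ℝ) ^ 2 + B * n) := by
  have h := (summable_jacobiTheta₂_term_iff (-(Complex.I * B / (2 * Real.pi)))
    (Complex.I * A / Real.pi)).2 (by
      have : (Complex.I * A / Real.pi : ℂ) = ((A / Real.pi : ℝ) : ℂ) * Complex.I := by
        push_cast; ring
      rw [this]; simp; positivity)
  refine h.norm.congr fun n => ?_
  rw [jacobiTheta₂_term, Complex.norm_exp]
  congr 1
  have hp : (Real.pi : ℂ) ≠ 0 := by exact_mod_cast Real.pi_ne_zero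
  have : (2 * ↑Real.pi * Complex.I * ↑n * -(Complex.I * ↑B / (2 * ↑Real.pi)) +
      ↑Real.pi * Complex.I * ↑n ^ 2 * (Complex.I * ↑A / ↑Real.pi) : ℂ)
      = ((-A * (n:ℝ) ^ 2 + B * n : ℝ) : ℂ) := by
    field_simp
    push_cast
    linear_combination ((n:ℂ)*(-B) + A * n^2) * Complex.I_sq
  rw [this, Complex.ofReal_re]

lemma gauss_int : ∫ t in Set.Ioi (0:ℝ), Real.exp (-t ^ 2) = Real.sqrt Real.pi / 2 := by
  have := integral_gaussian_Ioi 1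
  simpa using this

lemma gauss_integrable : Integrable (fun t : ℝ => Real.exp (-t ^ 2)) := by
  have := integrable_exp_neg_mul_sq (b := 1) one_pos
  simpa using this

lemma sqrtpi_ne : Real.sqrt Real.pi ≠ 0 := (Real.sqrt_pos.2 Real.pi_pos).ne'

lemma erfc_nonneg (x : ℝ) : 0 ≤ erfc x := by
  unfold erfc
  have : 0 ≤ ∫ t in Set.Ioi x, Real.exp (-t ^ 2) := by
    apply MeasureTheory.integral_nonneg; intro t; positivity
  positivity

lemma erfc_le (x : ℝ) (hx : 0 ≤ x) : erfc x ≤ Real.exp (-x ^ 2) := by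
  have h1 : ∫ t in Set.Ioi x, Real.exp (-t ^ 2) = ∫ t in Set.Ioi (0:ℝ), Real.exp (-(t + x) ^ 2) := by
    have := (measurePreserving_add_right (volume : Measure ℝ) x).setIntegral_preimage_emb
      (measurableEmbedding_addRight x) (fun t : ℝ => Real.exp (-t ^ 2)) (Set.Ioi x)
    rw [← this]
    simp
  have h2 : ∫ t in Set.Ioi (0:ℝ), Real.exp (-(t + x) ^ 2) ≤
      ∫ t in Set.Ioi (0:ℝ), Real.exp (-x ^ 2) * Real.exp (-t ^ 2) := by
    apply MeasureTheory.setIntegral_mono_on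
    · exact (gauss_integrable.comp_add_right x).integrableOn
    · exact (gauss_integrable.const_mul _).integrableOn
    · exact measurableSet_Ioi
    · intro t ht
      rw [← Real.exp_add]
      apply Real.exp_le_exp.2
      have : 0 ≤ t * x := mul_nonneg (le_of_lt ht) hx
      nlinarith
  rw [MeasureTheory.integral_const_mul, gauss_int] at h2
  unfold erfc
  rw [h1]
  have hp : 0 < Real.sqrt Real.pi := Real.sqrt_pos.2 Real.pi_pos
  calc _ ≤ 2 / Real.sqrt Real.pi * (Real.exp (-x ^ 2) * (Real.sqrt Real.pi / 2)) := by gcongr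
    _ = _ := by field_simp

lemma erf_pos (x : ℝ) (hx : 0 ≤ x) :
    1 - erfc x = 2 / Real.sqrt Real.pi * ∫ t in (0:ℝ)..x, Real.exp (-t ^ 2) := by
  have h := intervalIntegral.integral_Ioi_sub_Ioi (f := fun t : ℝ => Real.exp (-t ^ 2))
    (a := 0) (b := x) (μ := volume) gauss_integrable.integrableOn hx
  rw [← h, gauss_int, erfc]
  have := sqrtpi_ne
  field_simp

lemma erf_lem (x : ℝ) : Real.sign x * (1 - erfc |x|) =
    2 / Real.sqrt Real.pi * ∫ t in (0:ℝ)..x, Real.exp (-t ^ 2) := by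
  rcases lt_trichotomy x 0 with h | h | h
  · rw [Real.sign_of_neg h, abs_of_neg h, erf_pos _ (by linarith)]
    have := intervalIntegral.integral_comp_neg (a := 0) (b := x) (fun t : ℝ => Real.exp (-t ^ 2))
    simp only [neg_sq, neg_zero] at this
    rw [this, intervalIntegral.integral_symm]
    ring
  · simp [h]
  · rw [Real.sign_of_pos h, abs_of_pos h, erf_pos _ h.le, one_mul]

lemma erf_diff (κ : ℝ) (hκ : 0 < κ) (t r : ℝ) :
    1 / Real.sqrt κ * ∫ v in t..(t+1), Real.exp (-Real.pi / κ * (r - v) ^ 2) =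
    1 / 2 * (Real.sign (t + 1 - r) * (1 - erfc (Real.sqrt (Real.pi / κ) * |t + 1 - r|)) -
      Real.sign (t - r) * (1 - erfc (Real.sqrt (Real.pi / κ) * |t - r|))) := by
  set c := Real.sqrt (Real.pi / κ) with hc
  have hc0 : 0 < c := Real.sqrt_pos.2 (div_pos Real.pi_pos hκ)
  have hs : ∀ y, Real.sign y * (1 - erfc (c * |y|)) =
      2 / Real.sqrt Real.pi * ∫ t in (0:ℝ)..(c * y), Real.exp (-t ^ 2) := by
    intro y
    rw [← erf_lem, abs_mul, abs_of_pos hc0]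
    congr 1
    rcases lt_trichotomy y 0 with h | h | h
    · rw [Real.sign_of_neg h, Real.sign_of_neg (mul_neg_of_pos_of_neg hc0 h)]
    · simp [h]
    · rw [Real.sign_of_pos h, Real.sign_of_pos (mul_pos hc0 h)]
  rw [hs, hs, ← mul_sub, intervalIntegral.integral_interval_sub_left
    gauss_integrable.intervalIntegrable gauss_integrable.intervalIntegrable]
  have h1 := intervalIntegral.integral_comp_mul_sub (a := t) (b := t + 1)
    (fun t : ℝ => Real.exp (-t ^ 2)) hc0.ne' (c * r)
  have h2 : (fun v : ℝ => Real.exp (-Real.pi / κ * (r - v) ^ 2)) =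
      fun v => Real.exp (-(c * v - c * r) ^ 2) := by
    funext v
    congr 1
    have : c ^ 2 = Real.pi / κ := Real.sq_sqrt (by positivity)
    linear_combination (r - v) ^ 2 * this
  rw [h2, h1, smul_eq_mul, mul_sub, mul_sub]
  have h3 : c = Real.sqrt Real.pi / Real.sqrt κ := Real.sqrt_div Real.pi_pos.le κ
  have h4 : Real.sqrt κ ≠ 0 := (Real.sqrt_pos.2 hκ).ne'
  have h5 := sqrtpi_ne
  have h6 : 1 / Real.sqrt κ * c⁻¹ = 1 / Real.sqrt Real.pi := by
    rw [h3]; field_simp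
  rw [← mul_assoc, h6]; ring

lemma swap_lem (F : ℤ → ℝ → ℂ) (b : ℤ → ℝ) (hc : ∀ n, Continuous (F n)) (hb : Summable b) (t : ℝ)
    (h : ∀ n v, t ≤ v → v ≤ t + 1 → ‖F n v‖ ≤ b n) :
    HasSum (fun n => ∫ v in t..(t+1), F n v) (∫ v in t..(t+1), ∑' n, F n v) := by
  have hI : ∀ v ∈ Set.uIoc t (t+1), t ≤ v ∧ v ≤ t + 1 := by
    intro v hv
    rw [Set.uIoc_of_le (by linarith)] at hv
    exact ⟨hv.1.le, hv.2⟩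
  apply intervalIntegral.hasSum_integral_of_dominated_convergence (fun n _ => b n)
  · intro n; exact (hc n).aestronglyMeasurable
  · intro n; filter_upwards with v hv
    exact h n v (hI v hv).1 (hI v hv).2
  · filter_upwards with v hv using hb
  · exact intervalIntegrable_const
  · filter_upwards with v hv
    exact (Summable.of_norm_bounded hb fun n => h n v (hI v hv).1 (hI v hv).2).hasSum

lemma ee_add (x y : ℂ) : ee (x + y) = ee x * ee y := by
  unfold ee; rw [← Complex.exp_add]; ring_nf

lemma ee_int (n : ℤ) : ee n = 1 := by
  unfold ee; rw [Complex.exp_eq_one_iff]; exact ⟨n, by ring⟩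

lemma ee_ne (x : ℂ) : ee x ≠ 0 := Complex.exp_ne_zero _

lemma ee_zpow (x : ℂ) (n : ℤ) : ee x ^ n = ee (n * x) := by
  unfold ee; rw [← Complex.exp_int_mul]; ring_nf

lemma ee_one_iff (x : ℂ) : ee x = 1 ↔ ∃ n : ℤ, x = n := by
  unfold ee; rw [Complex.exp_eq_one_iff]
  have : (2 * (Real.pi:ℂ) * Complex.I) ≠ 0 := Complex.two_pi_I_ne_zero
  constructor
  · rintro ⟨n, hn⟩
    exact ⟨n, mul_left_cancel₀ this (by rw [hn]; ring)⟩
  · rintro ⟨n, hn⟩; exact ⟨n, by rw [hn]; ring⟩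

lemma norm_ee (x : ℂ) : ‖ee x‖ = Real.exp (-2 * Real.pi * x.im) := by
  unfold ee; rw [Complex.norm_exp]; congr 1; simp

/-- theta inversion -/
lemma theta_inv (κ : ℝ) (hκ : 0 < κ) (v : ℝ) (x : ℂ) :
    ∑' n : ℤ, cexp (-Real.pi * κ * (x + n) ^ 2 + 2 * Real.pi * I * v * (x + n)) =
    ∑' r : ℤ, ((1 / Real.sqrt κ * Real.exp (-Real.pi / κ * (r - v) ^ 2) : ℝ) : ℂ) * ee (r * x) := by
  have h := Complex.tsum_exp_neg_quadratic (a := κ) (by simpa using hκ) (-κ * x + I * v)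
  have e1 : ∀ n : ℤ, cexp (-Real.pi * κ * (x + n) ^ 2 + 2 * Real.pi * I * v * (x + n)) =
      cexp (-Real.pi * κ * x ^ 2 + 2 * Real.pi * I * v * x) *
      cexp (-Real.pi * κ * n ^ 2 + 2 * Real.pi * (-κ * x + I * v) * n) := by
    intro n; rw [← Complex.exp_add]; congr 1; ring
  simp_rw [e1]
  rw [tsum_mul_left, h, ← tsum_mul_left, ← tsum_mul_left]
  congr 1; funext r
  have hk : (κ:ℂ) ≠ 0 := by exact_mod_cast hκ.ne'
  have e2 : (κ:ℂ) ^ (1 / 2 : ℂ) = (Real.sqrt κ : ℂ) := by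
    rw [Real.sqrt_eq_rpow, Complex.ofReal_cpow hκ.le]; norm_num
  rw [e2]
  push_cast
  unfold ee
  rw [mul_left_comm, ← Complex.exp_add, mul_assoc (1 / _), ← Complex.exp_add]
  congr 2
  field_simp
  linear_combination (-κ ^ 2 * x ^ 2 + 2 * I * κ * x * v - I ^ 2 * v ^ 2 + v^2 - 2 * v * r) * Complex.I_sq

lemma sgn_sum (t : ℝ) (x : ℂ) (hx : ee x - 1 ≠ 0) :
    HasSum (fun r : ℤ => ((Real.sign (t + 1 - r) - Real.sign (t - r) : ℝ) : ℂ) * ee (r * x))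
      (2 * ((ee x - 1) * Rc t (ee x))) := by
  have hpos : ∀ r : ℤ, (r:ℝ) < t → Real.sign (t + 1 - r) - Real.sign (t - r) = 0 := by
    intro r hr
    rw [Real.sign_of_pos (by linarith), Real.sign_of_pos (by linarith)]; simp
  have hneg : ∀ r : ℤ, t + 1 < (r:ℝ) → Real.sign (t + 1 - r) - Real.sign (t - r) = 0 := by
    intro r hr
    rw [Real.sign_of_neg (by linarith), Real.sign_of_neg (by linarith)]; simp
  unfold Rc
  split_ifs with h
  · set k := ⌈t⌉ with hk
    have hs : 2 * ((ee x - 1) * (1 / 2 * ee x ^ k * (ee x + 1) / (ee x - 1))) =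
        ∑ r ∈ ({k, k+1} : Finset ℤ),
          ((Real.sign (t + 1 - r) - Real.sign (t - r) : ℝ) : ℂ) * ee (r * x) := by
      rw [Finset.sum_pair (by simp), ← h, ← ee_zpow, ← ee_zpow, zpow_add_one₀ (ee_ne x)]
      have e1 : (k:ℝ) + 1 - k = 1 := by ring
      have e2 : (k:ℝ) + 1 - ((k + 1 : ℤ) : ℝ) = 0 := by push_cast; ring
      have e3 : (k:ℝ) - ((k + 1 : ℤ) : ℝ) = -1 := by push_cast; ring
      rw [e1, e2, e3, sub_self, Real.sign_zero, Real.sign_of_pos one_pos,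
        Real.sign_of_neg (by norm_num : (-1:ℝ) < 0)]
      push_cast
      field_simp
      ring
    rw [hs]
    apply hasSum_sum_of_ne_finset_zero
    intro r hr
    simp only [Finset.mem_insert, Finset.mem_singleton, not_or] at hr
    rcases lt_or_gt_of_ne hr.1 with h1 | h1
    · rw [hpos r (by rw [← h]; exact_mod_cast h1)]; simp
    · have : k + 1 < r := by omega
      rw [hneg r (by rw [← h]; exact_mod_cast this)]; simp
  · set k := ⌈t⌉ with hk
    have h1 : t < k := lt_of_le_of_ne (Int.le_ceil t) (Ne.symm h)
    have h2 : (k:ℝ) < t + 1 := Int.ceil_lt_add_one t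
    have hs : 2 * ((ee x - 1) * (ee x ^ k / (ee x - 1))) =
        ((Real.sign (t + 1 - k) - Real.sign (t - k) : ℝ) : ℂ) * ee (k * x) := by
      rw [Real.sign_of_pos (by linarith), Real.sign_of_neg (by linarith), ← ee_zpow]
      push_cast
      field_simp
      ring
    rw [hs]
    apply hasSum_single
    intro r hr
    rcases lt_or_gt_of_ne hr with h3 | h3
    · have : r + 1 ≤ k := h3
      have : ((r:ℝ) + 1 ≤ k) := by exact_mod_cast this
      rw [hpos r (by linarith)]; simp
    · have : k + 1 ≤ r := h3
      have : ((k:ℝ) + 1 ≤ r) := by exact_mod_cast this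
      rw [hneg r (by linarith)]; simp

lemma norm_E (c : ℝ) (hc : 0 ≤ c) (y : ℝ) :
    ‖((Real.sign y * erfc (c * |y|) : ℝ) : ℂ)‖ ≤ Real.exp (-c ^ 2 * y ^ 2) := by
  rw [Complex.norm_real, norm_mul, Real.norm_of_nonneg (erfc_nonneg _)]
  have h1 : ‖Real.sign y‖ ≤ 1 := by
    rcases lt_trichotomy y 0 with h | h | h
    · rw [Real.sign_of_neg h]; simp
    · simp [h]
    · rw [Real.sign_of_pos h]; simp
  have h2 := erfc_le (c * |y|) (by positivity)
  rw [mul_pow, sq_abs] at h2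
  calc _ ≤ 1 * Real.exp (-(c ^ 2 * y ^ 2)) := by
        gcongr
        exact erfc_nonneg _
    _ = _ := by rw [one_mul]; ring_nf

lemma summable_E (κ : ℝ) (hκ : 0 < κ) (t : ℝ) (x : ℂ) :
    Summable fun r : ℤ => ((Real.sign (t - r) * erfc (Real.sqrt (Real.pi / κ) * |t - r|) : ℝ) : ℂ)
      * ee (r * x) := by
  have hp := Real.pi_pos
  refine Summable.of_norm_bounded
    ((summable_gauss (Real.pi / κ / 2) (by positivity) (-2 * Real.pi * x.im)).mul_left
      (Real.exp (Real.pi / κ * t ^ 2))) fun r => ?_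
  rw [norm_mul, norm_ee, ← Real.exp_add]
  calc _ ≤ Real.exp (-(Real.pi / κ) * (t - r) ^ 2) * Real.exp (-2 * Real.pi * (r * x).im) := by
        gcongr
        have := norm_E (Real.sqrt (Real.pi / κ)) (Real.sqrt_nonneg _) (t - r)
        rwa [Real.sq_sqrt (by positivity)] at this
    _ ≤ _ := by
        rw [← Real.exp_add]
        apply Real.exp_le_exp.2
        have h0 : 0 < Real.pi / κ := by positivity
        have : ((r:ℂ) * x).im = r * x.im := by simp
        rw [this]
        nlinarith [mul_nonneg h0.le (sq_nonneg ((r:ℝ) - 2 * t))]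

lemma key_lem (κ : ℝ) (hκ : 0 < κ) (t : ℝ) (x : ℂ) (hx : ∀ n : ℤ, x + n ≠ 0) :
    ∑' n : ℤ, cexp (-Real.pi * κ * (x + n) ^ 2 + 2 * Real.pi * I * t * (x + n)) / (x + n) =
    2 * Real.pi * I * (Rc t (ee x) - 1 / 2 * ∑' r : ℤ,
      ((Real.sign (t - r) * erfc (Real.sqrt (Real.pi / κ) * |t - r|) : ℝ) : ℂ) * ee (r * x)) := by
  have hp := Real.pi_pos
  have hx1 : ee x - 1 ≠ 0 := by
    intro h
    obtain ⟨n, hn⟩ := (ee_one_iff x).1 (sub_eq_zero.1 h)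
    exact hx (-n) (by rw [hn]; push_cast; ring)
  apply mul_left_cancel₀ hx1
  set c := Real.sqrt (Real.pi / κ) with hc
  -- step A
  have hA : ∀ n : ℤ, (ee x - 1) *
      (cexp (-Real.pi * κ * (x + n) ^ 2 + 2 * Real.pi * I * t * (x + n)) / (x + n)) =
      2 * Real.pi * I * ∫ v in t..(t+1),
        cexp (-Real.pi * κ * (x + n) ^ 2 + 2 * Real.pi * I * v * (x + n)) := by
    intro n
    have hn := hx n
    have h2 : (2 * (Real.pi:ℂ) * I * (x + n)) ≠ 0 := mul_ne_zero Complex.two_pi_I_ne_zero hn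
    have e1 : ∀ v : ℝ, cexp (-Real.pi * κ * (x + n) ^ 2 + 2 * Real.pi * I * v * (x + n)) =
        cexp (-Real.pi * κ * (x + n) ^ 2) * cexp (2 * Real.pi * I * (x + n) * v) := by
      intro v; rw [← Complex.exp_add]; congr 1; ring
    simp_rw [e1]
    rw [intervalIntegral.integral_const_mul, integral_exp_mul_complex h2]
    have e2 : cexp (2 * Real.pi * I * (x + n) * ((t + 1 : ℝ):ℂ)) =
        ee x * cexp (2 * Real.pi * I * (x + n) * t) := by
      have : (2 * Real.pi * I * (x + n) * ((t + 1 : ℝ):ℂ)) =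
        2 * Real.pi * I * x + 2 * Real.pi * I * (x + n) * t + 2 * Real.pi * I * n := by
        push_cast; ring
      rw [this, Complex.exp_add, Complex.exp_add]
      have h3 := ee_int n
      unfold ee at h3 ⊢
      rw [h3, mul_one]
    rw [e2]
    have := Complex.two_pi_I_ne_zero
    field_simp
  rw [← tsum_mul_left]
  simp_rw [hA]
  rw [tsum_mul_left]
  have hv : ∀ v, t ≤ v → v ≤ t + 1 → |v| ≤ |t| + 1 := by
    intro v h1 h2
    rw [abs_le]; constructor
    · have := neg_abs_le t; linarith
    · have := le_abs_self t; linarith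
  -- step B
  have hB := (swap_lem (fun (n:ℤ) v =>
      cexp (-Real.pi * κ * (x + n) ^ 2 + 2 * Real.pi * I * v * (x + n)))
      (fun n => Real.exp (Real.pi * κ * x.im ^ 2 + 2 * Real.pi * ((|t| + 1) * |x.im|)) *
        Real.exp (-(Real.pi * κ) * (n:ℝ) ^ 2 + (-2 * Real.pi * κ * x.re) * n))
      (fun n => by fun_prop)
      ((summable_gauss _ (by positivity) _).mul_left _) t (by
        intro n v h1 h2
        rw [Complex.norm_exp, ← Real.exp_add]
        apply Real.exp_le_exp.2
        have : (-Real.pi * κ * (x + n) ^ 2 + 2 * Real.pi * I * v * (x + n) : ℂ).re =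
          -Real.pi * κ * ((x.re + n) ^ 2 - x.im ^ 2) - 2 * Real.pi * (v * x.im) := by
          simp [sq]; ring
        rw [this]
        have h3 : - (v * x.im) ≤ (|t| + 1) * |x.im| := by
          calc _ ≤ |v * x.im| := neg_le_abs _
            _ = |v| * |x.im| := abs_mul _ _
            _ ≤ _ := by gcongr; exact hv v h1 h2
        have h4 := mul_le_mul_of_nonneg_left h3 (by positivity : (0:ℝ) ≤ 2 * Real.pi)
        have h5 : 0 ≤ Real.pi * κ * x.re ^ 2 := by positivity
        nlinarith)).tsum_eq
  rw [hB]
  simp_rw [theta_inv κ hκ]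
  have hD := (swap_lem (fun (r:ℤ) v =>
      ((1 / Real.sqrt κ * Real.exp (-Real.pi / κ * (r - v) ^ 2) : ℝ) : ℂ) * ee (r * x))
      (fun r => (1 / Real.sqrt κ * Real.exp (Real.pi / κ * (|t| + 1) ^ 2)) *
        Real.exp (-(Real.pi / κ / 2) * (r:ℝ) ^ 2 + (-2 * Real.pi * x.im) * r))
      (fun n => by fun_prop)
      ((summable_gauss _ (by positivity) _).mul_left _) t (by
        intro r v h1 h2
        rw [norm_mul, norm_ee, Complex.norm_real, Real.norm_of_nonneg (by positivity), mul_assoc (1 / _),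
          mul_assoc (1 / _), ← Real.exp_add, ← Real.exp_add]
        refine mul_le_mul_of_nonneg_left (Real.exp_le_exp.2 ?_) (by positivity)
        have h0 : 0 < Real.pi / κ := by positivity
        have : ((r:ℂ) * x).im = r * x.im := by simp
        rw [this]
        have h3 : v ^ 2 ≤ (|t| + 1) ^ 2 := by
          rw [← sq_abs v]; have := hv v h1 h2; gcongr
        have h4 := mul_le_mul_of_nonneg_left h3 h0.le
        have h5 : -Real.pi / κ = -(Real.pi / κ) := by ring
        rw [h5]
        nlinarith [mul_nonneg h0.le (sq_nonneg ((r:ℝ) - 2 * v))])).tsum_eq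
  rw [← hD]
  have hE : ∀ r : ℤ, ∫ v in t..(t+1),
      ((1 / Real.sqrt κ * Real.exp (-Real.pi / κ * (r - v) ^ 2) : ℝ) : ℂ) * ee (r * x) =
      1 / 2 * (((Real.sign (t + 1 - r) - Real.sign (t - r) : ℝ) : ℂ) * ee (r * x)) -
      1 / 2 * (((Real.sign (t + 1 - r) * erfc (c * |t + 1 - r|) : ℝ) : ℂ) * ee (r * x)) +
      1 / 2 * (((Real.sign (t - r) * erfc (c * |t - r|) : ℝ) : ℂ) * ee (r * x)) := by
    intro r
    rw [intervalIntegral.integral_mul_const, intervalIntegral.integral_ofReal,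
      intervalIntegral.integral_const_mul, erf_diff κ hκ]
    push_cast
    ring
  simp_rw [hE]
  have s3 := (summable_E κ hκ t x).hasSum
  have s2 : HasSum (fun r : ℤ =>
      ((Real.sign (t + 1 - r) * erfc (c * |t + 1 - r|) : ℝ) : ℂ) * ee (r * x))
      (ee x * ∑' r : ℤ, ((Real.sign (t - r) * erfc (c * |t - r|) : ℝ) : ℂ) * ee (r * x)) := by
    rw [← (Equiv.addRight (1:ℤ)).hasSum_iff]
    refine (s3.mul_left (ee x)).congr_fun ?_
    intro r
    simp only [Function.comp, Equiv.coe_addRight]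
    have : (((r + 1 : ℤ) : ℂ) * x) = r * x + x := by push_cast; ring
    rw [this, ee_add]
    have : (t + 1 - ((r + 1 : ℤ):ℝ)) = t - r := by push_cast; ring
    rw [this]; ring
  have s1 := sgn_sum t x hx1
  have tot := ((s1.mul_left (1/2)).sub (s2.mul_left (1/2))).add (s3.mul_left (1/2))
  rw [tot.tsum_eq]
  ring

/-- lattice point -/
def PT (s : ℚ × ℚ) (τ : ℂ) (p : ℤ × ℤ) : ℂ := zpt s τ - (p.1 * τ + p.2)

/-- lattice-sum term -/
def latT (m : ℕ) (s : ℚ × ℚ) (τ z : ℂ) (p : ℤ × ℤ) : ℂ :=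
  ee (-(m:ℂ) * ((s.1 : ℚ) * (p.2 : ℂ) - (s.2 : ℚ) * (p.1 : ℂ))) *
    (cexp (-(Real.pi * m / (τ.im : ℂ)) * (PT s τ p * (starRingEnd ℂ) (PT s τ p)
      - 2 * z * (starRingEnd ℂ) (PT s τ p) + z ^ 2)) / (z - PT s τ p))

lemma conj_eq (τ : ℂ) : (starRingEnd ℂ) τ = τ - 2 * I * τ.im := by
  apply Complex.ext <;> simp
  ring

lemma conj_PT (s : ℚ × ℚ) (τ : ℂ) (p : ℤ × ℤ) :
    (starRingEnd ℂ) (PT s τ p) = PT s τ p - 2 * I * τ.im * ((s.1 : ℚ) - (p.1 : ℂ)) := by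
  unfold PT zpt
  simp only [map_sub, map_add, map_mul, map_ratCast, map_intCast, conj_eq τ]
  ring

lemma exp_congr (A B : ℂ) (n : ℤ) (h : A = B + n * (2 * Real.pi * I)) : cexp A = cexp B :=
  Complex.exp_eq_exp_iff_exists_int.2 ⟨n, h⟩

lemma raw_eq (m : ℕ) (s : ℚ × ℚ) (τ z : ℂ) (hτ : 0 < τ.im) (k n : ℤ) :
    ee (-(m : ℂ) * (s.1 : ℚ) * zpt s τ) * (ee ((m : ℂ) * (k : ℂ) ^ 2 * τ + 2 * (m : ℂ) * (k : ℂ) * z) *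
     (cexp (-Real.pi * (m / τ.im : ℝ) * (z - zpt s τ + k * τ + n) ^ 2 +
      2 * Real.pi * I * ((-(2 * (m:ℚ) * s.1) : ℚ) : ℝ) * (z - zpt s τ + k * τ + n)) /
      (z - zpt s τ + k * τ + n))) = latT m s τ z (k, n) := by
  unfold latT
  rw [conj_PT]
  have e : z - PT s τ (k, n) = z - zpt s τ + k * τ + n := by unfold PT; ring
  rw [e, mul_div_assoc', mul_div_assoc', mul_div_assoc']
  congr 1
  unfold ee
  rw [← Complex.exp_add, ← Complex.exp_add, ← Complex.exp_add]
  apply exp_congr _ _ (-(m * k * n))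
  have h : (τ.im : ℂ) ≠ 0 := by exact_mod_cast hτ.ne'
  unfold PT zpt
  push_cast
  field_simp
  ring

lemma quad_bound (τ : ℂ) (hτ : 0 < τ.im) : ∃ δ : ℝ, 0 < δ ∧ ∀ k n : ℤ,
    δ * ((k:ℝ) ^ 2 + (n:ℝ) ^ 2) ≤ ‖(k * τ + n : ℂ)‖ ^ 2 := by
  have hM : 0 < 2 + (1 + 2 * τ.re ^ 2) / τ.im ^ 2 := by positivity
  refine ⟨(2 + (1 + 2 * τ.re ^ 2) / τ.im ^ 2)⁻¹, by positivity, fun k n => ?_⟩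
  have h1 : ‖(k * τ + n : ℂ)‖ ^ 2 = ((k:ℝ) * τ.re + n) ^ 2 + (k * τ.im) ^ 2 := by
    rw [Complex.sq_norm, Complex.normSq_apply]; simp; ring
  rw [h1, inv_mul_le_iff₀ hM]
  have h2 : (1 + 2 * τ.re ^ 2) / τ.im ^ 2 * ((k:ℝ) * τ.im) ^ 2 = (1 + 2 * τ.re ^ 2) * k ^ 2 := by
    field_simp
  have h3 : 0 ≤ (1 + 2 * τ.re ^ 2) / τ.im ^ 2 * ((k:ℝ) * τ.re + n) ^ 2 := by positivity
  nlinarith [sq_nonneg ((n:ℝ) + 2 * k * τ.re), sq_nonneg ((k:ℝ) * τ.im)]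

lemma summable_gauss2 (s : ℚ × ℚ) (τ : ℂ) (hτ : 0 < τ.im) (c : ℝ) (hc : 0 < c) (w : ℂ) :
    Summable fun p : ℤ × ℤ => Real.exp (-c * ‖PT s τ p - w‖ ^ 2) := by
  obtain ⟨δ, hδ, h⟩ := quad_bound τ hτ
  have h1 := summable_gauss (c * δ / 2) (by positivity) 0
  have h2 := (h1.mul_of_nonneg h1 (fun _ => Real.exp_nonneg _) (fun _ => Real.exp_nonneg _)).mul_left
    (Real.exp (c * ‖zpt s τ - w‖ ^ 2))
  refine Summable.of_nonneg_of_le (fun _ => Real.exp_nonneg _) (fun p => ?_) h2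
  rw [← Real.exp_add, ← Real.exp_add]
  apply Real.exp_le_exp.2
  have h3 := h p.1 p.2
  have h4 : ‖(p.1 * τ + p.2 : ℂ)‖ ≤ ‖zpt s τ - w‖ + ‖PT s τ p - w‖ := by
    have : (p.1 * τ + p.2 : ℂ) = (zpt s τ - w) - (PT s τ p - w) := by unfold PT; ring
    rw [this]; exact norm_sub_le _ _
  have h5 : ‖(p.1 * τ + p.2 : ℂ)‖ ^ 2 ≤ 2 * ‖zpt s τ - w‖ ^ 2 + 2 * ‖PT s τ p - w‖ ^ 2 := by
    have := norm_nonneg (p.1 * τ + p.2 : ℂ)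
    nlinarith [sq_nonneg (‖zpt s τ - w‖ - ‖PT s τ p - w‖)]
  have h6 := mul_le_mul_of_nonneg_left (h3.trans h5) hc.le
  nlinarith

lemma summable_latT (m : ℕ) (hm : 0 < m) (s : ℚ × ℚ) (τ z : ℂ) (hτ : 0 < τ.im) :
    Summable (latT m s τ z) := by
  have hp := Real.pi_pos
  have hm' : (0:ℝ) < m := by exact_mod_cast hm
  set κ := Real.pi * m / τ.im with hκ
  have hκ0 : 0 < κ := by positivity
  have h1 := (summable_gauss2 s τ hτ (κ / 2) (by positivity) 0).mul_left
    (Real.exp (3 * κ * ‖z‖ ^ 2))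
  have h2 := (summable_gauss2 s τ hτ 1 one_pos z).tendsto_cofinite_zero
  have h3 := h2.eventually (gt_mem_nhds (Real.exp_pos (-1)))
  refine Summable.of_norm_bounded_eventually h1 ?_
  filter_upwards [h3] with p hp1
  have hp2 : 1 ≤ ‖z - PT s τ p‖ := by
    have := Real.exp_lt_exp.1 hp1
    rw [norm_sub_rev]
    nlinarith [norm_nonneg (PT s τ p - z)]
  have hee : ‖ee (-(m:ℂ) * ((s.1 : ℚ) * (p.2 : ℂ) - (s.2 : ℚ) * (p.1 : ℂ)))‖ = 1 := by
    rw [norm_ee]; simp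
  unfold latT
  rw [norm_mul, hee, one_mul, norm_div]
  calc _ ≤ ‖cexp (-(Real.pi * m / (τ.im : ℂ)) * (PT s τ p * (starRingEnd ℂ) (PT s τ p)
      - 2 * z * (starRingEnd ℂ) (PT s τ p) + z ^ 2))‖ := div_le_self (norm_nonneg _) hp2
    _ ≤ _ := by
      rw [Complex.norm_exp, ← Real.exp_add]
      apply Real.exp_le_exp.2
      set P := PT s τ p
      have e1 : (-(Real.pi * m / (τ.im : ℂ)) * (P * (starRingEnd ℂ) P
        - 2 * z * (starRingEnd ℂ) P + z ^ 2)) = ((-κ : ℝ) : ℂ) * (((‖P‖ ^ 2 : ℝ):ℂ)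
          - (2 * z * (starRingEnd ℂ) P - z ^ 2)) := by
        rw [Complex.mul_conj, Complex.normSq_eq_norm_sq]; push_cast [hκ]; ring
      rw [e1, Complex.re_ofReal_mul, Complex.sub_re, Complex.ofReal_re]
      have e2 : (2 * z * (starRingEnd ℂ) P - z ^ 2).re ≤ 2 * ‖z‖ * ‖P‖ + ‖z‖ ^ 2 := by
        refine (Complex.re_le_norm _).trans ((norm_sub_le _ _).trans ?_)
        simp
      have e3 : (2 * z * (starRingEnd ℂ) P - z ^ 2).re ≤ ‖P‖ ^ 2 / 2 + 3 * ‖z‖ ^ 2 := by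
        nlinarith [sq_nonneg (‖P‖ - 2 * ‖z‖)]
      have e4 := mul_le_mul_of_nonneg_left e3 hκ0.le
      simp only [sub_zero]
      nlinarith

/-- theta coefficient -/
def gT (m : ℕ) (τ z : ℂ) (k : ℤ) : ℂ := ee ((k:ℂ) ^ 2 / (4 * m) * τ + k * z)

/-- error coefficient -/
def hT (m : ℕ) (s : ℚ × ℚ) (τ : ℂ) (r : ℤ) : ℂ :=
  1 / 2 * ((Real.sign (((-(2 * (m:ℚ) * s.1) : ℚ) : ℝ) - r) *
    erfc (Real.sqrt (Real.pi / (m / τ.im)) * |((-(2 * (m:ℚ) * s.1) : ℚ) : ℝ) - r|) : ℝ) : ℂ) *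
    ee (-(m : ℂ) * (s.1 : ℚ) * zpt s τ - (r:ℂ) ^ 2 / (4 * m) * τ - r * zpt s τ)

lemma summable_gT (m : ℕ) (hm : 0 < m) (τ z : ℂ) (hτ : 0 < τ.im) : Summable (gT m τ z) := by
  have hp := Real.pi_pos
  have hm' : (0:ℝ) < m := by exact_mod_cast hm
  have h := summable_gauss (2 * Real.pi * τ.im / (4 * m)) (by positivity) (-2 * Real.pi * z.im)
  refine Summable.of_norm_bounded h fun k => le_of_eq ?_
  unfold gT
  rw [norm_ee]
  congr 1
  have : ((k:ℂ) ^ 2 / (4 * m) * τ + k * z) = (((k:ℝ) ^ 2 / (4 * m) : ℝ) : ℂ) * τ + ((k:ℝ):ℂ) * z := by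
    push_cast; ring
  rw [this, Complex.add_im, Complex.im_ofReal_mul, Complex.im_ofReal_mul]
  ring

lemma summable_hT (m : ℕ) (hm : 0 < m) (s : ℚ × ℚ) (τ : ℂ) (hτ : 0 < τ.im) :
    Summable (hT m s τ) := by
  have hp := Real.pi_pos
  have hm' : (0:ℝ) < m := by exact_mod_cast hm
  set t := ((-(2 * (m:ℚ) * s.1) : ℚ) : ℝ) with ht
  set κ := Real.pi * τ.im / m with hκ
  have hκ0 : 0 < κ := by positivity
  have h := (summable_gauss (κ / 4) (by positivity) (2 * Real.pi * (zpt s τ).im)).mul_left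
    (1 / 2 * Real.exp (3 * κ * t ^ 2 + 2 * Real.pi * m * s.1 * (zpt s τ).im))
  refine Summable.of_norm_bounded h fun r => ?_
  unfold hT
  rw [norm_mul, norm_mul, norm_ee]
  have e0 : ‖(1 / 2 : ℂ)‖ = 1 / 2 := by norm_num
  rw [e0, mul_assoc (1 / 2 : ℝ), mul_assoc (1 / 2 : ℝ)]
  refine mul_le_mul_of_nonneg_left ?_ (by norm_num)
  have h1 := norm_E (Real.sqrt (Real.pi / (m / τ.im))) (Real.sqrt_nonneg _) (t - r)
  have e1 : Real.pi / (m / τ.im) = κ := by rw [hκ]; field_simp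
  rw [Real.sq_sqrt (by positivity), e1] at h1
  rw [e1]
  refine (mul_le_mul_of_nonneg_right h1 (Real.exp_nonneg _)).trans ?_
  rw [← Real.exp_add, ← Real.exp_add]
  apply Real.exp_le_exp.2
  have e2 : (-(m : ℂ) * (s.1 : ℚ) * zpt s τ - (r:ℂ) ^ 2 / (4 * m) * τ - r * zpt s τ) =
      ((-m * s.1 : ℝ) : ℂ) * zpt s τ - (((r:ℝ) ^ 2 / (4 * m) : ℝ) : ℂ) * τ
        - ((r:ℝ):ℂ) * zpt s τ := by push_cast; ring
  rw [e2, Complex.sub_im, Complex.sub_im, Complex.im_ofReal_mul, Complex.im_ofReal_mul,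
    Complex.im_ofReal_mul]
  have e3 : Real.pi * ((r:ℝ) ^ 2 / (4 * m) * τ.im) = κ / 4 * r ^ 2 := by rw [hκ]; field_simp
  nlinarith [mul_nonneg hκ0.le (sq_nonneg ((r:ℝ) / 2 - 2 * t))]

lemma jTheta_shift (m : ℕ) (l n : ℤ) (τ z : ℂ) :
    ∑' k : ℤ, gT m τ z (2 * m * k + (n * (2 * m) + l)) = jTheta m l τ z := by
  unfold jTheta
  conv_rhs => rw [← (Equiv.addRight (n:ℤ)).tsum_eq]
  congr 1; funext k
  unfold gT
  simp only [Equiv.coe_addRight]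
  push_cast
  ring_nf

lemma ThStar_eq (m : ℕ) (hm : 0 < m) (s : ℚ × ℚ) (l : ℤ) (τ : ℂ) (hτ : 0 < τ.im) :
    ThStar m s l τ = -∑' n : ℤ, hT m s τ (n * (2 * m) + l) := by
  have hp := Real.pi_pos
  have hm' : (0:ℝ) < m := by exact_mod_cast hm
  unfold ThStar
  rw [← tsum_mul_left, ← tsum_neg]
  congr 1; funext n
  unfold hT
  have e1 : ((-(2 * (m:ℚ) * s.1) : ℚ) : ℝ) - ((n * (2 * m) + l : ℤ) : ℝ)
      = -(2 * m * lamVal m s l n) := by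
    unfold lamVal; push_cast; field_simp; ring
  have e2 : Real.sqrt (Real.pi / (m / τ.im)) * |(2 * m * lamVal m s l n)| =
      2 * |lamVal m s l n| * Real.sqrt (Real.pi * (m : ℝ) * τ.im) := by
    have : Real.pi * (m : ℝ) * τ.im = m ^ 2 * (Real.pi / (m / τ.im)) := by field_simp
    rw [this, Real.sqrt_mul (by positivity), Real.sqrt_sq hm'.le, abs_mul,
      abs_of_pos (by positivity : (0:ℝ) < 2 * m)]
    ring
  have e3 : Real.sign (-(2 * m * lamVal m s l n)) = - Real.sign (lamVal m s l n) := by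
    have h2 : (0:ℝ) < 2 * m := by positivity
    rcases lt_trichotomy (lamVal m s l n) 0 with h | h | h
    · rw [Real.sign_of_neg h, Real.sign_of_pos (by nlinarith)]; simp
    · simp [h]
    · rw [Real.sign_of_pos h, Real.sign_of_neg (by nlinarith)]
  rw [e1, abs_neg, e2, e3]
  have e4 : ee (-(m : ℂ) * (s.1 : ℚ) * zpt s τ - ((n * (2 * m) + l : ℤ):ℂ) ^ 2 / (4 * m) * τ
      - ((n * (2 * m) + l : ℤ):ℂ) * zpt s τ) =
      ee ((m : ℂ) * (s.1 : ℚ) * (s.2 : ℚ)) *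
      (ee (-(2 * (m : ℂ) * (s.2 : ℚ) * (lamVal m s l n : ℝ))) *
      ee (-(m : ℂ) * (lamVal m s l n : ℝ) ^ 2 * τ)) := by
    rw [← ee_add, ← ee_add]
    congr 1
    have : (m:ℂ) ≠ 0 := by exact_mod_cast hm.ne'
    unfold lamVal zpt
    push_cast
    field_simp
    ring
  rw [e4]
  push_cast
  ring

lemma tsum_residue (N : ℕ) (hN : 0 < N) (f : ℤ → ℂ) (hf : Summable f) :
    ∑' r, f r = ∑ l ∈ Finset.range N, ∑' n : ℤ, f (n * N + l) := by
  have : NeZero N := ⟨hN.ne'⟩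
  rw [← (Int.divModEquiv N).symm.tsum_eq, ← (Equiv.prodComm (Fin N) ℤ).tsum_eq]
  have hs : Summable fun c : Fin N × ℤ =>
      f ((Int.divModEquiv N).symm ((Equiv.prodComm (Fin N) ℤ) c)) :=
    hf.comp_injective (i := fun c => (Int.divModEquiv N).symm ((Equiv.prodComm (Fin N) ℤ) c))
      ((Equiv.injective _).comp (Equiv.injective _))
  rw [hs.tsum_prod, tsum_fintype, Finset.sum_range]
  rfl

lemma cross_gen (N : ℕ) (hN : 0 < N) (g h : ℤ → ℂ) (hg : Summable g) (hh : Summable h) :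
    HasSum (fun k : ℤ => ∑' r : ℤ, g (N * k + r) * h r)
      (∑ l ∈ Finset.range N, ∑' n : ℤ, (∑' k : ℤ, g (N * k + (n * N + l))) * h (n * N + l)) := by
  have hgh : Summable fun x : ℤ × ℤ => g x.1 * h x.2 :=
    summable_mul_of_summable_norm hg.norm hh.norm
  have hinj : Function.Injective (fun x : ℤ × ℤ => ((N * x.1 + x.2, x.2) : ℤ × ℤ)) := by
    intro x y hxy
    have h1 := congrArg Prod.fst hxy
    have h2 := congrArg Prod.snd hxy
    simp only at h1 h2
    have h0 : (N : ℤ) ≠ 0 := by exact_mod_cast hN.ne'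
    exact Prod.ext (mul_left_cancel₀ h0 (by linarith)) h2
  have hS : Summable fun x : ℤ × ℤ => g (N * x.1 + x.2) * h x.2 := by
    have h0 := hgh.comp_injective hinj
    simp only [Function.comp_def] at h0
    exact h0
  have h1 : Summable fun k : ℤ => ∑' r : ℤ, g (N * k + r) * h r := hS.prod
  have h3 : Summable fun r : ℤ => ∑' k : ℤ, g (N * k + r) * h r := hS.prod_symm.prod
  have h2 : ∑' k : ℤ, ∑' r : ℤ, g (N * k + r) * h r = ∑' r : ℤ, ∑' k : ℤ, g (N * k + r) * h r :=
    (Summable.tsum_comm (f := fun k r : ℤ => g (N * k + r) * h r) hS).symm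
  have h4 := h1.hasSum
  rw [h2, tsum_residue N hN _ h3] at h4
  simp_rw [tsum_mul_right] at h4
  exact h4

lemma cross_sum (m : ℕ) (hm : 0 < m) (s : ℚ × ℚ) (τ z : ℂ) (hτ : 0 < τ.im) :
    HasSum (fun k : ℤ => ∑' r : ℤ, gT m τ z (2 * m * k + r) * hT m s τ r)
      (-∑ l ∈ Finset.range (2 * m), ThStar m s (l : ℤ) τ * jTheta m (l : ℤ) τ z) := by
  have h := cross_gen (2 * m) (by omega) (gT m τ z) (hT m s τ)
    (summable_gT m hm τ z hτ) (summable_hT m hm s τ hτ)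
  simp only [Nat.cast_mul, Nat.cast_ofNat] at h
  have e : ∑ l ∈ Finset.range (2 * m), ∑' n : ℤ, (∑' k : ℤ, gT m τ z (2 * m * k + (n * (2 * m) + l)))
      * hT m s τ (n * (2 * m) + l) =
      -∑ l ∈ Finset.range (2 * m), ThStar m s (l : ℤ) τ * jTheta m (l : ℤ) τ z := by
    rw [← Finset.sum_neg_distrib]
    apply Finset.sum_congr rfl
    intro l _
    simp_rw [jTheta_shift]
    rw [tsum_mul_left, ThStar_eq m hm s l τ hτ]
    ring
  rw [e] at h
  exact h

lemma hat_formula (m : ℕ) (hm : 0 < m) (s : ℚ × ℚ) (τ z : ℂ) (hτ : 0 < τ.im)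
    (hz : ∀ a b : ℤ, z ≠ zpt s τ + (a : ℂ) * τ + (b : ℂ)) :
    AhatA m s τ z = 1 / (2 * Real.pi * I) * ∑' p, latT m s τ z p := by
  have hm' : (0:ℝ) < m := by exact_mod_cast hm
  have hm0 : (m:ℂ) ≠ 0 := by exact_mod_cast hm.ne'
  have hL := summable_latT m hm s τ z hτ
  have hP : Summable fun k : ℤ => ∑' n : ℤ, latT m s τ z (k, n) := hL.prod
  have hterm : ∀ k : ℤ, ee (-(m : ℂ) * (s.1 : ℚ) * zpt s τ) *
      (ee ((m : ℂ) * (k : ℂ) ^ 2 * τ + 2 * (m : ℂ) * (k : ℂ) * z) *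
      Rc ((-(2 * (m : ℚ) * s.1) : ℚ) : ℝ) (ee ((k : ℂ) * τ + z) / ee (zpt s τ))) =
      1 / (2 * Real.pi * I) * ∑' n : ℤ, latT m s τ z (k, n) +
      ∑' r : ℤ, gT m τ z (2 * m * k + r) * hT m s τ r := by
    intro k
    have e1 : ee ((k : ℂ) * τ + z) / ee (zpt s τ) = ee (z - zpt s τ + k * τ) := by
      rw [div_eq_iff (ee_ne _), ← ee_add]; congr 1; ring
    have hk := key_lem (m / τ.im) (by positivity) ((-(2 * (m : ℚ) * s.1) : ℚ) : ℝ)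
      (z - zpt s τ + k * τ) (by
        intro n h0
        apply hz (-k) (-n)
        push_cast
        linear_combination h0)
    simp_rw [← raw_eq m s τ z hτ]
    rw [tsum_mul_left, tsum_mul_left, hk, e1]
    have hg : ∀ r : ℤ, gT m τ z (2 * m * k + r) * hT m s τ r =
      (ee (-(m : ℂ) * (s.1 : ℚ) * zpt s τ) *
      ee ((m : ℂ) * (k : ℂ) ^ 2 * τ + 2 * (m : ℂ) * (k : ℂ) * z) * (1 / 2)) *
      (((Real.sign (((-(2 * (m:ℚ) * s.1) : ℚ) : ℝ) - r) *
        erfc (Real.sqrt (Real.pi / (m / τ.im)) * |((-(2 * (m:ℚ) * s.1) : ℚ) : ℝ) - r|) : ℝ) : ℂ) *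
        ee (r * (z - zpt s τ + k * τ))) := by
      intro r
      unfold gT hT
      have : ee (((2 * m * k + r : ℤ) : ℂ) ^ 2 / (4 * m) * τ + ((2 * m * k + r : ℤ) : ℂ) * z) *
        ee (-(m : ℂ) * (s.1 : ℚ) * zpt s τ - (r:ℂ) ^ 2 / (4 * m) * τ - r * zpt s τ) =
        ee (-(m : ℂ) * (s.1 : ℚ) * zpt s τ) *
        ee ((m : ℂ) * (k : ℂ) ^ 2 * τ + 2 * (m : ℂ) * (k : ℂ) * z) *
        ee (r * (z - zpt s τ + k * τ)) := by
        rw [← ee_add, ← ee_add, ← ee_add]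
        congr 1
        push_cast
        field_simp
        ring
      linear_combination (1 / 2 * ((Real.sign (((-(2 * (m:ℚ) * s.1) : ℚ) : ℝ) - r) *
        erfc (Real.sqrt (Real.pi / (m / τ.im)) * |((-(2 * (m:ℚ) * s.1) : ℚ) : ℝ) - r|) : ℝ) : ℂ))
         * this
    simp_rw [hg]
    rw [tsum_mul_left]
    have := Complex.two_pi_I_ne_zero
    field_simp
    ring
  have hA : AppellA m s τ z = 1 / (2 * Real.pi * I) * ∑' p, latT m s τ z p +
      (-∑ l ∈ Finset.range (2 * m), ThStar m s (l : ℤ) τ * jTheta m (l : ℤ) τ z) := by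
    unfold AppellA Av
    rw [← tsum_mul_left]
    simp_rw [hterm]
    rw [((hP.hasSum.mul_left _).add (cross_sum m hm s τ z hτ)).tsum_eq, hL.tsum_prod]
  unfold AhatA
  rw [hA]; ring

lemma prop1 (m : ℕ) (s : ℚ × ℚ) (a b : ℤ) (τ z : ℂ) :
    ∑' p, latT m (s.1 + (a : ℚ), s.2 + (b : ℚ)) τ z p =
      ee (-(m : ℂ) * ((b : ℂ) * (s.1 : ℚ) - (a : ℂ) * (s.2 : ℚ))) * ∑' p, latT m s τ z p := by
  rw [← tsum_mul_left, ← (Equiv.addRight ((a, b) : ℤ × ℤ)).tsum_eq]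
  congr 1; funext p
  obtain ⟨k, n⟩ := p
  simp only [Equiv.coe_addRight, Prod.mk_add_mk]
  have e : PT (s.1 + (a : ℚ), s.2 + (b : ℚ)) τ (k + a, n + b) = PT s τ (k, n) := by
    unfold PT zpt; push_cast; ring
  unfold latT
  rw [e, ← mul_assoc, ← ee_add]
  congr 1
  unfold ee
  apply exp_congr _ _ (-m * (a * n - b * k))
  push_cast
  ring

lemma prop2 (m : ℕ) (s : ℚ × ℚ) (a b : ℤ) (τ z : ℂ) (hτ : 0 < τ.im) :
    ∑' p, latT m s τ (z + a * τ + b) p =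
      ee (-(m : ℂ) * ((a : ℂ) ^ 2 * τ + 2 * (a : ℂ) * z)) * ∑' p, latT m s τ z p := by
  rw [← tsum_mul_left]
  conv_rhs => rw [← (Equiv.addRight ((a, b) : ℤ × ℤ)).tsum_eq]
  congr 1; funext p
  obtain ⟨k, n⟩ := p
  simp only [Equiv.coe_addRight, Prod.mk_add_mk]
  unfold latT
  rw [conj_PT, conj_PT]
  have e : z + a * τ + b - PT s τ (k, n) = z - PT s τ (k + a, n + b) := by
    unfold PT; push_cast; ring
  rw [e, mul_div_assoc', mul_div_assoc', mul_div_assoc']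
  congr 1
  unfold ee
  rw [← Complex.exp_add, ← Complex.exp_add, ← Complex.exp_add]
  have h : (τ.im : ℂ) ≠ 0 := by exact_mod_cast hτ.ne'
  apply exp_congr _ _ (-m * (a * b + b * k * 0 + a * n - b * k))
  unfold PT zpt
  push_cast
  field_simp
  ring

/-- right multiplication by an element of SL2 -/
def slEquiv (a b c d : ℤ) (h : a * d - b * c = 1) : ℤ × ℤ ≃ ℤ × ℤ where
  toFun p := (p.1 * a + p.2 * c, p.1 * b + p.2 * d)
  invFun p := (p.1 * d - p.2 * c, -p.1 * b + p.2 * a)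
  left_inv p := by
    ext
    · simp only; linear_combination p.1 * h
    · simp only; linear_combination p.2 * h
  right_inv p := by
    ext
    · simp only; linear_combination p.1 * h
    · simp only; linear_combination p.2 * h

lemma j_ne (a b c d : ℤ) (h : a * d - b * c = 1) (τ : ℂ) (hτ : 0 < τ.im) :
    (c : ℂ) * τ + d ≠ 0 := by
  intro h0
  have h1 : (c:ℝ) * τ.im = 0 := by simpa using congrArg Complex.im h0
  have hc : c = 0 := by
    rcases mul_eq_zero.1 h1 with h2 | h2
    · exact_mod_cast h2
    · exact absurd h2 hτ.ne'
  subst hc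
  have hd : d = 0 := by
    have : (d:ℂ) = 0 := by simpa using h0
    exact_mod_cast this
  subst hd
  simp at h

lemma im_moeb (a b c d : ℤ) (h : a * d - b * c = 1) (τ : ℂ) :
    (((a : ℂ) * τ + (b : ℂ)) / ((c : ℂ) * τ + (d : ℂ))).im =
      τ.im / Complex.normSq ((c : ℂ) * τ + (d : ℂ)) := by
  have h' : (a:ℝ) * d - b * c = 1 := by exact_mod_cast h
  rw [Complex.div_im, ← sub_div]
  congr 1
  simp
  linear_combination τ.im * h'

lemma PT_moeb (a b c d : ℤ) (h : a * d - b * c = 1) (s : ℚ × ℚ) (τ : ℂ) (hτ : 0 < τ.im) (p : ℤ × ℤ) :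
    PT s (((a : ℂ) * τ + (b : ℂ)) / ((c : ℂ) * τ + (d : ℂ))) p =
    PT (s.1 * (a : ℚ) + s.2 * (c : ℚ), s.1 * (b : ℚ) + s.2 * (d : ℚ)) τ (slEquiv a b c d h p) /
      ((c : ℂ) * τ + (d : ℂ)) := by
  have hj := j_ne a b c d h τ hτ
  have hT : ((a : ℂ) * τ + (b : ℂ)) / ((c : ℂ) * τ + (d : ℂ)) * ((c : ℂ) * τ + (d : ℂ)) =
    (a : ℂ) * τ + (b : ℂ) := div_mul_cancel₀ _ hj
  rw [eq_div_iff hj]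
  unfold PT zpt slEquiv
  simp only [Equiv.coe_fn_mk]
  push_cast
  linear_combination ((s.1 : ℂ) - p.1) * hT

lemma prop3 (m : ℕ) (s : ℚ × ℚ) (a b c d : ℤ) (h : a * d - b * c = 1) (τ z : ℂ) (hτ : 0 < τ.im) :
    ∑' p, latT m s (((a : ℂ) * τ + (b : ℂ)) / ((c : ℂ) * τ + (d : ℂ)))
          (z / ((c : ℂ) * τ + (d : ℂ))) p =
        ((c : ℂ) * τ + (d : ℂ)) * ee ((m : ℂ) * (c : ℂ) * z ^ 2 / ((c : ℂ) * τ + (d : ℂ))) *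
      ∑' p, latT m (s.1 * (a : ℚ) + s.2 * (c : ℚ), s.1 * (b : ℚ) + s.2 * (d : ℚ)) τ z p := by
  rw [← tsum_mul_left]
  conv_rhs => rw [← (slEquiv a b c d h).tsum_eq]
  congr 1; funext p
  have hj := j_ne a b c d h τ hτ
  have ht : (τ.im : ℂ) ≠ 0 := by exact_mod_cast hτ.ne'
  unfold latT
  rw [PT_moeb a b c d h s τ hτ p, im_moeb a b c d h τ]
  set P := PT (s.1 * (a : ℚ) + s.2 * (c : ℚ), s.1 * (b : ℚ) + s.2 * (d : ℚ)) τ (slEquiv a b c d h p)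
  set Q := (starRingEnd ℂ) P with hQ
  have hcj : (starRingEnd ℂ) ((c : ℂ) * τ + (d : ℂ)) = (c : ℂ) * τ + d - 2 * I * τ.im * c := by
    simp only [map_add, map_mul, map_intCast, conj_eq τ]; ring
  have hcj0 : (c : ℂ) * τ + d - 2 * I * τ.im * c ≠ 0 := by
    rw [← hcj]; exact (map_ne_zero _).2 hj
  have hn : ((τ.im / Complex.normSq ((c : ℂ) * τ + (d : ℂ)) : ℝ) : ℂ) =
      τ.im / (((c : ℂ) * τ + (d : ℂ)) * ((c : ℂ) * τ + d - 2 * I * τ.im * c)) := by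
    rw [← hcj, Complex.mul_conj]; push_cast; rfl
  rw [hn, map_div₀, hcj, ← hQ]
  have hch : ee (-(m:ℂ) * ((s.1 : ℚ) * (p.2 : ℂ) - (s.2 : ℚ) * (p.1 : ℂ))) =
      ee (-(m:ℂ) * (((s.1 * (a : ℚ) + s.2 * (c : ℚ), s.1 * (b : ℚ) + s.2 * (d : ℚ)).1 : ℚ) *
        ((slEquiv a b c d h p).2 : ℂ) -
        ((s.1 * (a : ℚ) + s.2 * (c : ℚ), s.1 * (b : ℚ) + s.2 * (d : ℚ)).2 : ℚ) *
        ((slEquiv a b c d h p).1 : ℂ))) := by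
    congr 1
    have h' : (a:ℂ) * d - b * c = 1 := by exact_mod_cast h
    unfold slEquiv
    simp only [Equiv.coe_fn_mk]
    push_cast
    linear_combination (m:ℂ) * ((s.1 : ℂ) * p.2 - s.2 * p.1) * h'
  rw [hch]
  set X := ee (-(m:ℂ) * (((s.1 * (a : ℚ) + s.2 * (c : ℚ), s.1 * (b : ℚ) + s.2 * (d : ℚ)).1 : ℚ) *
        ((slEquiv a b c d h p).2 : ℂ) -
        ((s.1 * (a : ℚ) + s.2 * (c : ℚ), s.1 * (b : ℚ) + s.2 * (d : ℚ)).2 : ℚ) *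
        ((slEquiv a b c d h p).1 : ℂ)))
  clear_value X Q P
  set j := (c : ℂ) * τ + (d : ℂ) with hjd
  clear_value j
  have hexp : cexp (-(Real.pi * m / (τ.im / (j * (j - 2 * I * τ.im * c)))) *
      (P / j * (Q / (j - 2 * I * τ.im * c)) - 2 * (z / j) * (Q / (j - 2 * I * τ.im * c)) +
        (z / j) ^ 2)) = ee (m * c * z ^ 2 / j) *
      cexp (-(Real.pi * m / τ.im) * (P * Q - 2 * z * Q + z ^ 2)) := by
    unfold ee
    rw [← Complex.exp_add]
    congr 1
    obtain ⟨J, hJ⟩ : ∃ J, J = j - 2 * I * τ.im * c := ⟨_, rfl⟩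
    rw [← hJ] at hcj0 ⊢
    field_simp
    linear_combination (-m * z ^ 2) * hJ
  rw [hexp]
  have : z / j - P / j = (z - P) / j := by ring
  rw [this, div_div_eq_mul_div]
  ring

/-- Theorem (Zwegers): the completed Appell–Lerch sum `Â^s_m` transforms like a Jacobi form
of weight 1 and index `m`: it has the stated behaviour under translation of `s` by `ℤ²`,
under elliptic transformations of `z`, and under `SL(2,ℤ)`. -/
theorem completed_appell_lerch_transformations (m : ℕ) (hm : 0 < m) (s : ℚ × ℚ) :
    (∀ lam mu : ℤ, ∀ τ : ℂ, 0 < τ.im → ∀ z : ℂ,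
      (∀ a b : ℤ, z ≠ zpt s τ + (a : ℂ) * τ + (b : ℂ)) →
      AhatA m (s.1 + (lam : ℚ), s.2 + (mu : ℚ)) τ z =
        ee (-(m : ℂ) * ((mu : ℂ) * (s.1 : ℚ) - (lam : ℂ) * (s.2 : ℚ))) * AhatA m s τ z) ∧
    (∀ lam mu : ℤ, ∀ τ : ℂ, 0 < τ.im → ∀ z : ℂ,
      (∀ a b : ℤ, z ≠ zpt s τ + (a : ℂ) * τ + (b : ℂ)) →
      AhatA m s τ (z + (lam : ℂ) * τ + (mu : ℂ)) =
        ee (-(m : ℂ) * ((lam : ℂ) ^ 2 * τ + 2 * (lam : ℂ) * z)) * AhatA m s τ z) ∧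
    (∀ a b c d : ℤ, a * d - b * c = 1 → ∀ τ : ℂ, 0 < τ.im → ∀ z : ℂ,
      (∀ i j : ℤ,
        z ≠ zpt (s.1 * (a : ℚ) + s.2 * (c : ℚ), s.1 * (b : ℚ) + s.2 * (d : ℚ)) τ +
          (i : ℂ) * τ + (j : ℂ)) →
      AhatA m s (((a : ℂ) * τ + (b : ℂ)) / ((c : ℂ) * τ + (d : ℂ)))
          (z / ((c : ℂ) * τ + (d : ℂ))) =
        ((c : ℂ) * τ + (d : ℂ)) * ee ((m : ℂ) * (c : ℂ) * z ^ 2 / ((c : ℂ) * τ + (d : ℂ))) *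
          AhatA m (s.1 * (a : ℚ) + s.2 * (c : ℚ), s.1 * (b : ℚ) + s.2 * (d : ℚ)) τ z) := by
  refine ⟨?_, ?_, ?_⟩
  · intro lam mu τ hτ z hz
    rw [hat_formula m hm s τ z hτ hz, hat_formula m hm _ τ z hτ, prop1]
    · ring
    · intro a b h
      apply hz (lam + a) (mu + b)
      rw [h]; unfold zpt; push_cast; ring
  · intro lam mu τ hτ z hz
    rw [hat_formula m hm s τ z hτ hz, hat_formula m hm s τ _ hτ, prop2 m s lam mu τ z hτ]
    · ring
    · intro a b h
      apply hz (a - lam) (b - mu)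
      push_cast
      linear_combination h
  · intro a b c d h τ hτ z hz
    have hj := j_ne a b c d h τ hτ
    have him : 0 < (((a : ℂ) * τ + (b : ℂ)) / ((c : ℂ) * τ + (d : ℂ))).im := by
      rw [im_moeb a b c d h τ]
      exact div_pos hτ (Complex.normSq_pos.2 hj)
    rw [hat_formula m hm _ τ z hτ hz, hat_formula m hm s _ _ him, prop3 m s a b c d h τ z hτ]
    · ring
    · intro i k h0
      apply hz (i * a + k * c) (i * b + k * d)
      have hT : ((a : ℂ) * τ + (b : ℂ)) / ((c : ℂ) * τ + (d : ℂ)) * ((c : ℂ) * τ + (d : ℂ)) =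
        (a : ℂ) * τ + (b : ℂ) := div_mul_cancel₀ _ hj
      rw [div_eq_iff hj] at h0
      rw [h0]
      unfold zpt
      push_cast
      linear_combination ((s.1 : ℂ) + i) * hT
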